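/- arXiv:2001.02751 — 7 statements merged into one kernel-verified Lean document; each statement's English description precedes it below -/
import Mathlib

section
/- Let X be a nonempty set and f : X → X. Then f is completely regular in the semigroup of all self-maps of X under composition (i.e., there exists g : X → X with f ∘ g ∘ f = f and f ∘ g = g ∘ f) if and only if the restriction of f to its image f(X) is a bijection of f(X) onto f(X). Moreover, in this case f(X) = f(f(X)). -/
/-!
A commuting `g` with `f ∘ g ∘ f = f` preserves the image of `f` and is a two-sided inverse of `f`
there. Conversely, if `h` inverts `f` on its image, then `h ∘ h ∘ f` is a commuting generalized
inverse of `f`: composing it with `f` on either side gives the idempotent `h ∘ f`, which fixes the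
image of `f` pointwise.
-/

open Function Set

section

variable {X : Type*} {f g h : X → X}

theorem invOn_range_of_commute_of_comp_comp_eq (hcomm : Function.Commute f g)
    (hfgf : f ∘ g ∘ f = f) : InvOn g f (range f) (range f) := by
  have right_inv : RightInvOn g f (range f) := forall_mem_range.2 (congrFun hfgf)
  have left_inv : LeftInvOn g f (range f) := fun y hy => (hcomm y).symm.trans (right_inv hy)
  exact ⟨left_inv, right_inv⟩

theorem bijOn_range_of_commute_of_comp_comp_eq (hcomm : Function.Commute f g)
    (hfgf : f ∘ g ∘ f = f) : BijOn f (range f) (range f) :=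
  (invOn_range_of_commute_of_comp_comp_eq hcomm hfgf).bijOn
    (mapsTo_range f (range f)) hcomm.mapsTo_range

theorem comp_comp_comp_eq_comp_of_leftInvOn_range (hleft : LeftInvOn h f (range f)) :
    (h ∘ h ∘ f) ∘ f = h ∘ f :=
  funext fun x => congrArg h (hleft (mem_range_self x))

theorem comp_comp_comp_eq_comp_of_rightInvOn_range (hright : RightInvOn h f (range f))
    (hmaps : MapsTo h (range f) (range f)) : f ∘ h ∘ h ∘ f = h ∘ f :=
  funext fun x => hright (hmaps (mem_range_self x))

theorem commute_comp_comp_of_invOn_range (hinv : InvOn h f (range f) (range f))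
    (hmaps : MapsTo h (range f) (range f)) : Function.Commute f (h ∘ h ∘ f) :=
  semiconj_iff_comp_eq.2 <|
    (comp_comp_comp_eq_comp_of_rightInvOn_range hinv.2 hmaps).trans
      (comp_comp_comp_eq_comp_of_leftInvOn_range hinv.1).symm

theorem comp_comp_comp_eq_self_of_invOn_range
    (hinv : InvOn h f (range f) (range f)) (hmaps : MapsTo h (range f) (range f)) :
    f ∘ (h ∘ h ∘ f) ∘ f = f :=
  calc
    f ∘ (h ∘ h ∘ f) ∘ f = (h ∘ f) ∘ f :=
      congrArg (· ∘ f) (comp_comp_comp_eq_comp_of_rightInvOn_range hinv.2 hmaps)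
    _ = f := funext fun x => hinv.1 (mem_range_self x)

end

/-- For a self-map `f` of a nonempty set `X`, `f` is completely regular in the
semigroup of self-maps under composition iff the restriction of `f` to its image is a
bijection of the image onto itself; moreover in this case `f(X) = f(f(X))`. -/
theorem stmt_0 {X : Type*} [Nonempty X] (f : X → X) :
    ((∃ g : X → X, f ∘ g ∘ f = f ∧ f ∘ g = g ∘ f) ↔
      Set.BijOn f (Set.range f) (Set.range f)) ∧
    ((∃ g : X → X, f ∘ g ∘ f = f ∧ f ∘ g = g ∘ f) →
      Set.range f = f '' Set.range f) := by
  have regular_iff_bijOn : (∃ g : X → X, f ∘ g ∘ f = f ∧ f ∘ g = g ∘ f) ↔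
      BijOn f (range f) (range f) := by
    constructor
    · rintro ⟨g, hfgf, hcomm⟩
      exact bijOn_range_of_commute_of_comp_comp_eq (semiconj_iff_comp_eq.2 hcomm) hfgf
    · intro hbij
      let h := invFunOn f (range f)
      have hinv : InvOn h f (range f) (range f) := hbij.invOn_invFunOn
      have hmaps : MapsTo h (range f) (range f) := hbij.surjOn.mapsTo_invFunOn
      exact ⟨h ∘ h ∘ f, comp_comp_comp_eq_self_of_invOn_range hinv hmaps,
        (commute_comp_comp_of_invOn_range hinv hmaps).comp_eq⟩
  exact ⟨regular_iff_bijOn, fun hreg => (regular_iff_bijOn.1 hreg).image_eq.symm⟩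
end

section
/- Let S be a completely simple semigroup (a semigroup with no proper two-sided ideal that contains a minimal idempotent) which is the union S = S₁ ∪ S₂ of two left simple subsemigroups S₁ and S₂. Then either S itself is left simple, or the union is disjoint (S₁ ∩ S₂ = ∅) and S₁ and S₂ are precisely the minimal left ideals of S. -/
/-- A left ideal of a semigroup `S`: a nonempty subset `L` with `S L ⊆ L`. -/
def IsLeftIdeal {S : Type*} [Semigroup S] (L : Set S) : Prop :=
  L.Nonempty ∧ ∀ s : S, ∀ a ∈ L, s * a ∈ L

/-- A two-sided ideal of a semigroup `S`. -/
def IsTwoSidedIdealSet {S : Type*} [Semigroup S] (I : Set S) : Prop :=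
  I.Nonempty ∧ ∀ s : S, ∀ a ∈ I, s * a ∈ I ∧ a * s ∈ I

/-- A minimal left ideal of a semigroup `S`. -/
def IsMinLeftIdeal {S : Type*} [Semigroup S] (L : Set S) : Prop :=
  IsLeftIdeal L ∧ ∀ L' : Set S, IsLeftIdeal L' → L' ⊆ L → L' = L

/-- A subsemigroup (as a subset): nonempty and closed under multiplication. -/
def IsSubsemigroupSet {S : Type*} [Semigroup S] (T : Set S) : Prop :=
  T.Nonempty ∧ ∀ a ∈ T, ∀ b ∈ T, a * b ∈ T

/-- A subset `T` of a semigroup is left simple (as a semigroup in its own right):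
it has no proper left ideal. -/
def LeftSimpleIn {S : Type*} [Semigroup S] (T : Set S) : Prop :=
  ∀ L : Set S, L.Nonempty → L ⊆ T → (∀ s ∈ T, ∀ a ∈ L, s * a ∈ L) → L = T

/-!
A left ideal meeting a left simple subsemigroup contains it. Hence, if `S` is a finite union of left
simple subsemigroups, every left ideal is a union of some of them, so there are only finitely many
left ideals and a minimal one `L` exists. Its translates `L * t` are again minimal left ideals, and
they cover `S` when `S` is simple. The minimal left ideals therefore partition `S`, and each of
`S₁`, `S₂` lies in a single block: either there is one block, `S` itself, or there are two, and
these must be `S₁` and `S₂`.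
-/

section

variable {S : Type*} [Semigroup S]

theorem isLeftIdeal_univ [Nonempty S] : IsLeftIdeal (Set.univ : Set S) :=
  ⟨Set.univ_nonempty, fun _ _ _ => Set.mem_univ _⟩

namespace IsLeftIdeal

variable {K L T : Set S}

theorem inter (hK : IsLeftIdeal K) (hL : IsLeftIdeal L) (hne : (K ∩ L).Nonempty) :
    IsLeftIdeal (K ∩ L) :=
  ⟨hne, fun s a ha => ⟨hK.2 s a ha.1, hL.2 s a ha.2⟩⟩

theorem image_mul_right (hL : IsLeftIdeal L) (t : S) : IsLeftIdeal ((· * t) '' L) := by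
  refine ⟨hL.1.image _, ?_⟩
  rintro s _ ⟨a, ha, rfl⟩
  exact ⟨s * a, hL.2 s a ha, mul_assoc s a t⟩

theorem preimage_mul_right (hL : IsLeftIdeal L) {t : S} (hne : ((· * t) ⁻¹' L).Nonempty) :
    IsLeftIdeal ((· * t) ⁻¹' L) := by
  refine ⟨hne, fun s a ha => ?_⟩
  rw [Set.mem_preimage, mul_assoc]
  exact hL.2 s (a * t) ha

theorem isTwoSidedIdealSet_iUnion_image_mul_right (hL : IsLeftIdeal L) :
    IsTwoSidedIdealSet (⋃ t, (· * t) '' L) := by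
  obtain ⟨a, ha⟩ := hL.1
  refine ⟨⟨a * a, Set.mem_iUnion.2 ⟨a, a, ha, rfl⟩⟩, fun s x hx => ?_⟩
  obtain ⟨t, b, hb, rfl⟩ := Set.mem_iUnion.1 hx
  exact ⟨Set.mem_iUnion.2 ⟨t, s * b, hL.2 s b hb, mul_assoc s b t⟩,
    Set.mem_iUnion.2 ⟨t * s, b, hb, (mul_assoc b t s).symm⟩⟩

theorem subset_of_leftSimpleIn (hL : IsLeftIdeal L) (hT : IsSubsemigroupSet T)
    (hTs : LeftSimpleIn T) (hne : (L ∩ T).Nonempty) : T ⊆ L :=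
  Set.inter_eq_right.1 <| hTs (L ∩ T) hne Set.inter_subset_right
    fun s hs a ha => ⟨hL.2 s a ha.1, hT.2 s hs a ha.2⟩

end IsLeftIdeal

namespace IsMinLeftIdeal

variable {K L : Set S}

theorem eq_of_inter_nonempty (hK : IsMinLeftIdeal K) (hL : IsMinLeftIdeal L)
    (hne : (K ∩ L).Nonempty) : K = L :=
  have hKL : IsLeftIdeal (K ∩ L) := hK.1.inter hL.1 hne
  (hK.2 _ hKL Set.inter_subset_left).symm.trans (hL.2 _ hKL Set.inter_subset_right)

theorem image_mul_right (hL : IsMinLeftIdeal L) (t : S) : IsMinLeftIdeal ((· * t) '' L) := by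
  refine ⟨hL.1.image_mul_right t, fun K hK hKL => hKL.antisymm ?_⟩
  obtain ⟨x, hx⟩ := hK.1
  obtain ⟨a, ha, rfl⟩ := hKL hx
  have hpre : IsLeftIdeal (L ∩ (· * t) ⁻¹' K) :=
    hL.1.inter (hK.preimage_mul_right ⟨a, hx⟩) ⟨a, ha, hx⟩
  exact Set.image_subset_iff.2 (Set.inter_eq_left.1 (hL.2 _ hpre Set.inter_subset_left))

theorem exists_mem_of_simple (hL : IsMinLeftIdeal L)
    (hsimple : ∀ I : Set S, IsTwoSidedIdealSet I → I = Set.univ) (x : S) :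
    ∃ M : Set S, IsMinLeftIdeal M ∧ x ∈ M := by
  have hcover := hsimple _ hL.1.isTwoSidedIdealSet_iUnion_image_mul_right
  obtain ⟨t, hx⟩ := Set.iUnion_eq_univ_iff.1 hcover x
  exact ⟨_, hL.image_mul_right t, hx⟩

theorem exists_superset_of_simple {T : Set S} (hL : IsMinLeftIdeal L)
    (hsimple : ∀ I : Set S, IsTwoSidedIdealSet I → I = Set.univ)
    (hT : IsSubsemigroupSet T) (hTs : LeftSimpleIn T) :
    ∃ M : Set S, IsMinLeftIdeal M ∧ T ⊆ M := by
  obtain ⟨x, hx⟩ := hT.1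
  obtain ⟨M, hM, hxM⟩ := hL.exists_mem_of_simple hsimple x
  exact ⟨M, hM, hM.1.subset_of_leftSimpleIn hT hTs ⟨x, hxM, hx⟩⟩

theorem iff_eq_or_eq_of_union_eq_univ (hK : IsMinLeftIdeal K) (hL : IsMinLeftIdeal L)
    (hcover : K ∪ L = Set.univ) (M : Set S) : IsMinLeftIdeal M ↔ M = K ∨ M = L := by
  constructor
  · intro hM
    obtain ⟨x, hx⟩ := hM.1.1
    have hxKL : x ∈ K ∪ L := hcover ▸ Set.mem_univ x
    exact hxKL.imp (fun hxK => hM.eq_of_inter_nonempty hK ⟨x, hx, hxK⟩)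
      (fun hxL => hM.eq_of_inter_nonempty hL ⟨x, hx, hxL⟩)
  · rintro (rfl | rfl)
    exacts [hK, hL]

end IsMinLeftIdeal

section LeftSimpleCover

variable {𝒯 : Set (Set S)}

theorem IsLeftIdeal.sUnion_subset_eq_self {L : Set S} (hL : IsLeftIdeal L)
    (hsub : ∀ T ∈ 𝒯, IsSubsemigroupSet T) (hls : ∀ T ∈ 𝒯, LeftSimpleIn T)
    (hcover : ⋃₀ 𝒯 = Set.univ) : ⋃₀ {T ∈ 𝒯 | T ⊆ L} = L := by
  refine (Set.sUnion_subset fun T hT => hT.2).antisymm fun x hx => ?_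
  obtain ⟨T, hT, hxT⟩ := Set.sUnion_eq_univ_iff.1 hcover x
  exact ⟨T, ⟨hT, hL.subset_of_leftSimpleIn (hsub T hT) (hls T hT) ⟨x, hx, hxT⟩⟩, hxT⟩

theorem finite_setOf_isLeftIdeal_of_sUnion_eq_univ (hfin : 𝒯.Finite)
    (hsub : ∀ T ∈ 𝒯, IsSubsemigroupSet T) (hls : ∀ T ∈ 𝒯, LeftSimpleIn T)
    (hcover : ⋃₀ 𝒯 = Set.univ) : {L : Set S | IsLeftIdeal L}.Finite :=
  (hfin.powerset.image Set.sUnion).subset fun L hL =>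
    ⟨{T ∈ 𝒯 | T ⊆ L}, Set.sep_subset _ _, hL.sUnion_subset_eq_self hsub hls hcover⟩

theorem exists_isMinLeftIdeal_of_finite [Nonempty S] (hfin : {L : Set S | IsLeftIdeal L}.Finite) :
    ∃ L : Set S, IsMinLeftIdeal L := by
  obtain ⟨L, hL⟩ := hfin.exists_minimal ⟨Set.univ, isLeftIdeal_univ⟩
  exact ⟨L, hL.prop, fun K hK hKL => hL.eq_of_subset hK hKL⟩

end LeftSimpleCover

end

theorem stmt_1_general {S : Type*} [Semigroup S]
    (hsimple : ∀ I : Set S, IsTwoSidedIdealSet I → I = Set.univ)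
    (S₁ S₂ : Set S)
    (h1 : IsSubsemigroupSet S₁) (h2 : IsSubsemigroupSet S₂)
    (hls1 : LeftSimpleIn S₁) (hls2 : LeftSimpleIn S₂)
    (hunion : S₁ ∪ S₂ = Set.univ) :
    (∀ L : Set S, IsLeftIdeal L → L = Set.univ) ∨
    (S₁ ∩ S₂ = ∅ ∧ ∀ L : Set S, IsMinLeftIdeal L ↔ (L = S₁ ∨ L = S₂)) := by
  have : Nonempty S := h1.1.to_type
  obtain ⟨L₀, hL₀⟩ : ∃ L : Set S, IsMinLeftIdeal L :=
    exists_isMinLeftIdeal_of_finite <|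
      finite_setOf_isLeftIdeal_of_sUnion_eq_univ (Set.toFinite {S₁, S₂})
        (by simp [h1, h2]) (by simp [hls1, hls2]) (by rw [Set.sUnion_pair, hunion])
  obtain ⟨M₁, hM₁, hS₁M₁⟩ := hL₀.exists_superset_of_simple hsimple h1 hls1
  obtain ⟨M₂, hM₂, hS₂M₂⟩ := hL₀.exists_superset_of_simple hsimple h2 hls2
  rcases (M₁ ∩ M₂).eq_empty_or_nonempty with hdisj | hmeet
  · right
    have hM : Disjoint M₁ M₂ := Set.disjoint_iff_inter_eq_empty.2 hdisj
    obtain rfl : S₁ = M₁ := hS₁M₁.antisymm <|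
      (hM.mono_right hS₂M₂).subset_left_of_subset_union (hunion ▸ M₁.subset_univ)
    obtain rfl : S₂ = M₂ := hS₂M₂.antisymm <|
      hM.symm.subset_right_of_subset_union (hunion ▸ M₂.subset_univ)
    exact ⟨hdisj, hM₁.iff_eq_or_eq_of_union_eq_univ hM₂ hunion⟩
  · left
    obtain rfl : M₁ = M₂ := hM₁.eq_of_inter_nonempty hM₂ hmeet
    obtain rfl : M₁ = Set.univ :=
      Set.univ_subset_iff.1 (hunion ▸ Set.union_subset hS₁M₁ hS₂M₂)
    exact fun L hL => hM₁.2 L hL L.subset_univ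

/-- A completely simple semigroup (simple with a minimal idempotent) which is
the union of two left simple subsemigroups `S₁`, `S₂` is either itself left simple, or the
union is disjoint and `S₁`, `S₂` are precisely the minimal left ideals. -/
theorem stmt_1 {S : Type*} [Semigroup S]
    (hsimple : ∀ I : Set S, IsTwoSidedIdealSet I → I = Set.univ)
    (hminidem : ∃ p : S, p * p = p ∧
      ∀ q : S, q * q = q → q = q * p → q = p * q → q = p)
    (S₁ S₂ : Set S)
    (h1 : IsSubsemigroupSet S₁) (h2 : IsSubsemigroupSet S₂)
    (hls1 : LeftSimpleIn S₁) (hls2 : LeftSimpleIn S₂)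
    (hunion : S₁ ∪ S₂ = Set.univ) :
    (∀ L : Set S, IsLeftIdeal L → L = Set.univ) ∨
    (S₁ ∩ S₂ = ∅ ∧ ∀ L : Set S, IsMinLeftIdeal L ↔ (L = S₁ ∨ L = S₂)) :=
  stmt_1_general hsimple S₁ S₂ h1 h2 hls1 hls2 hunion
end

section
/- Let X be a compact metric space and M a monoid acting on X by continuous surjective maps, with Ellis semigroup E(X,M). The proximality relation on X is transitive if and only if E(X,M) has exactly one minimal left ideal. -/
/-- A left ideal of the subsemigroup `S` of self-maps of `X` (under composition):
a nonempty subset `L ⊆ S` with `f ∘ g ∈ L` for all `f ∈ S`, `g ∈ L`. -/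
def IsLeftIdealIn {X : Type*} (S L : Set (X → X)) : Prop :=
  L.Nonempty ∧ L ⊆ S ∧ ∀ f ∈ S, ∀ g ∈ L, f ∘ g ∈ L

/-- A minimal left ideal of `S`. -/
def IsMinLeftIdealIn {X : Type*} (S L : Set (X → X)) : Prop :=
  IsLeftIdealIn S L ∧ ∀ L' : Set (X → X), IsLeftIdealIn S L' → L' ⊆ L → L' = L

/-!
In a compact space, `x` and `y` are proximal exactly when some element of the Ellis semigroup `E`
takes the same value at `x` and `y`.

If `E` has a unique minimal left ideal `L`, then for a proximal pair `x, y` the left ideal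
`{f ∈ E | f x = f y}` contains a minimal one, hence contains `L`. So every element of `L` identifies
all proximal pairs, and proximality is transitive.

Conversely, let `L` and `L'` be minimal left ideals. By the Ellis–Numakura lemma there are
idempotents `u ∈ L` and `v ∈ L'` with `v ∘ u = u`. Since `u x` and `v x` are both proximal to `x`,
transitivity gives `f ∈ E` with `f (u x) = f (v x)`, that is, `f ∘ v` agrees at `u x` and `x`.
Minimality of `L'` provides a left inverse `g` of `f` on the range of `v`, so `u x = v x`.
Hence `u = v` lies in both ideals, and `L = L'`.
-/

open Set Topology Uniformity

section LeftIdeal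

variable {X : Type*} {S L L' : Set (X → X)} {m : X → X}

theorem IsLeftIdealIn.image_comp_subset (hL : IsLeftIdealIn S L) (hL' : IsLeftIdealIn S L')
    (hm : m ∈ L) : (· ∘ m) '' L' ⊆ L :=
  image_subset_iff.2 fun f hf => hL.2.2 f (hL'.2.1 hf) m hm

theorem IsLeftIdealIn.image_comp (hL : IsLeftIdealIn S L) (hL' : IsLeftIdealIn S L')
    (hm : m ∈ L) : IsLeftIdealIn S ((· ∘ m) '' L') := by
  refine ⟨hL'.1.image _, (hL.image_comp_subset hL' hm).trans hL.2.1, ?_⟩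
  rintro f hf _ ⟨g, hg, rfl⟩
  exact ⟨f ∘ g, hL'.2.2 f hf g hg, rfl⟩

theorem IsMinLeftIdealIn.image_comp_eq (hL : IsMinLeftIdealIn S L) (hL' : IsLeftIdealIn S L')
    (hm : m ∈ L) : (· ∘ m) '' L' = L :=
  hL.2 _ (hL.1.image_comp hL' hm) (hL.1.image_comp_subset hL' hm)

theorem IsMinLeftIdealIn.exists_comp_eq (hL : IsMinLeftIdealIn S L) {f : X → X} (hm : m ∈ L)
    (hf : f ∈ L) : ∃ g ∈ S, g ∘ m = f := by
  obtain ⟨g, hg, hgm⟩ := (hL.image_comp_eq hL.1 hm).symm ▸ hf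
  exact ⟨g, hL.1.2.1 hg, hgm⟩

theorem IsMinLeftIdealIn.eq_of_mem (hL : IsMinLeftIdealIn S L) (hL' : IsMinLeftIdealIn S L')
    (hm : m ∈ L) (hm' : m ∈ L') : L = L' := by
  rw [← hL.image_comp_eq hL.1 hm, hL'.image_comp_eq hL.1 hm']

-- `IsLeftIdealIn S S` says that `S` is nonempty and closed under composition.
theorem IsLeftIdealIn.setOf_apply_eq (hS : IsLeftIdealIn S S) {x y : X}
    (hxy : ∃ f ∈ S, f x = f y) : IsLeftIdealIn S {f ∈ S | f x = f y} :=
  ⟨hxy, sep_subset _ _, fun f hf g hg => ⟨hS.2.2 f hf g hg.1, congrArg f hg.2⟩⟩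

end LeftIdeal

section Compact

variable {X : Type*} [TopologicalSpace X]

theorem isLeftIdealIn_closure_self {A : Set (X → X)} (hne : A.Nonempty)
    (hcont : ∀ f ∈ A, Continuous f) (hcomp : ∀ f ∈ A, ∀ g ∈ A, f ∘ g ∈ A) :
    IsLeftIdealIn (closure A) (closure A) := by
  have comp_mem_of_left_mem : ∀ f ∈ A, ∀ g ∈ closure A, f ∘ g ∈ closure A := fun f hf g hg =>
    map_mem_closure (continuous_pi fun x => (hcont f hf).comp (continuous_apply x)) hg (hcomp f hf)
  refine ⟨hne.closure, Subset.rfl, fun f hf g hg => ?_⟩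
  rw [← closure_closure]
  exact map_mem_closure (f := (· ∘ g)) (Pi.continuous_precomp g) hf fun h hh =>
    comp_mem_of_left_mem h hh g hg

variable {S L L' : Set (X → X)}

theorem IsMinLeftIdealIn.isCompact (hL : IsMinLeftIdealIn S L) (hS : IsLeftIdealIn S S)
    (hSc : IsCompact S) : IsCompact L := by
  obtain ⟨m, hm⟩ := hL.1.1
  rw [← hL.image_comp_eq hS hm]
  exact hSc.image (Pi.continuous_precomp m)

theorem IsLeftIdealIn.exists_isCompact_subset (hL : IsLeftIdealIn S L) (hS : IsLeftIdealIn S S)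
    (hSc : IsCompact S) : ∃ K ⊆ L, IsCompact K ∧ IsLeftIdealIn S K := by
  obtain ⟨m, hm⟩ := hL.1
  exact ⟨_, hL.image_comp_subset hS hm, hSc.image (Pi.continuous_precomp m), hL.image_comp hS hm⟩

variable [T2Space X]

theorem isLeftIdealIn_sInter_of_isChain {c : Set (Set (X → X))} (hc : IsChain (· ⊆ ·) c)
    (hne : c.Nonempty) (hcompact : ∀ K ∈ c, IsCompact K) (hideal : ∀ K ∈ c, IsLeftIdealIn S K) :
    IsLeftIdealIn S (⋂₀ c) := by
  refine ⟨?_, ?_, fun f hf g hg K hK => (hideal K hK).2.2 f hf g (hg K hK)⟩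
  · have := hne.to_subtype
    have hchain : IsChain (· ⊇ ·) c := hc.symm
    exact IsCompact.nonempty_sInter_of_directed_nonempty_isCompact_isClosed hchain.directedOn
      (fun K hK => (hideal K hK).1) hcompact fun K hK => (hcompact K hK).isClosed
  · obtain ⟨K, hK⟩ := hne
    exact (sInter_subset_of_mem hK).trans (hideal K hK).2.1

theorem IsLeftIdealIn.exists_isMinLeftIdealIn_subset (hL : IsLeftIdealIn S L)
    (hS : IsLeftIdealIn S S) (hSc : IsCompact S) : ∃ K ⊆ L, IsMinLeftIdealIn S K := by
  obtain ⟨K₀, hK₀L, hK₀⟩ := hL.exists_isCompact_subset hS hSc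
  obtain ⟨K, hKK₀, hK⟩ := zorn_superset_nonempty {K | IsCompact K ∧ IsLeftIdealIn S K}
    (fun c hcs hc hne => ⟨⋂₀ c,
      ⟨(hcs hne.some_mem).1.of_isClosed_subset
          (isClosed_sInter fun K hK => (hcs hK).1.isClosed) (sInter_subset_of_mem hne.some_mem),
        isLeftIdealIn_sInter_of_isChain hc hne (fun K hK => (hcs hK).1) fun K hK => (hcs hK).2⟩,
      fun K hK => sInter_subset_of_mem hK⟩) K₀ hK₀
  refine ⟨K, hKK₀.trans hK₀L, hK.prop.2, fun J hJ hJK => ?_⟩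
  obtain ⟨J₀, hJ₀J, hJ₀⟩ := hJ.exists_isCompact_subset hS hSc
  exact hJK.antisymm ((hK.le_of_le hJ₀ (hJ₀J.trans hJK)).trans hJ₀J)

theorem exists_comp_self_eq_of_isCompact {T : Set (X → X)} (hne : T.Nonempty) (hTc : IsCompact T)
    (hT : ∀ f ∈ T, ∀ g ∈ T, f ∘ g ∈ T) : ∃ u ∈ T, u ∘ u = u := by
  let : Semigroup (X → X) := { mul := (· ∘ ·), mul_assoc := fun _ _ _ => rfl }
  exact exists_idempotent_in_compact_subsemigroup Pi.continuous_precomp T hne hTc hT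

theorem IsMinLeftIdealIn.exists_idempotent_comp_eq (hL : IsMinLeftIdealIn S L)
    (hL' : IsLeftIdealIn S L') (hL'c : IsCompact L') {m : X → X} (hm : m ∈ L) :
    ∃ v ∈ L', v ∘ v = v ∧ v ∘ m = m := by
  have hne : (L' ∩ (· ∘ m) ⁻¹' {m}).Nonempty := by
    rwa [← image_inter_nonempty_iff, hL.image_comp_eq hL' hm, inter_singleton_nonempty]
  have hcompact : IsCompact (L' ∩ (· ∘ m) ⁻¹' {m}) :=
    hL'c.inter_right (isClosed_singleton.preimage (Pi.continuous_precomp m))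
  obtain ⟨v, ⟨hv, hvm⟩, hvv⟩ := exists_comp_self_eq_of_isCompact hne hcompact
    fun f ⟨hf, hfm⟩ g ⟨hg, hgm⟩ =>
      ⟨hL'.2.2 f (hL'.2.1 hf) g hg, (congrArg (f ∘ ·) hgm).trans hfm⟩
  exact ⟨v, hv, hvv, hvm⟩

theorem IsMinLeftIdealIn.eq_of_isTrans (hL : IsMinLeftIdealIn S L) (hL' : IsMinLeftIdealIn S L')
    (hS : IsLeftIdealIn S S) (hSc : IsCompact S)
    (htrans : IsTrans X fun x y => ∃ f ∈ S, f x = f y) : L = L' := by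
  obtain ⟨m, hm⟩ := hL.1.1
  obtain ⟨u, hu, huu, -⟩ := hL.exists_idempotent_comp_eq hL.1 (hL.isCompact hS hSc) hm
  obtain ⟨v, hv, hvv, hvu⟩ := hL.exists_idempotent_comp_eq hL'.1 (hL'.isCompact hS hSc) hu
  suffices huv : u = v from hL.eq_of_mem hL' hu (huv ▸ hv)
  funext x
  obtain ⟨f, hf, hfx⟩ : ∃ f ∈ S, f (u x) = f (v x) :=
    htrans.trans _ x _ ⟨u, hL.1.2.1 hu, congrFun huu x⟩ ⟨v, hL'.1.2.1 hv, (congrFun hvv x).symm⟩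
  obtain ⟨g, -, hg⟩ : ∃ g ∈ S, g ∘ (f ∘ v) = v :=
    hL'.exists_comp_eq (hL'.1.2.2 f hf v hv) hv
  calc
    u x = v (u x) := (congrFun hvu x).symm
    _ = g (f (v (u x))) := (congrFun hg (u x)).symm
    _ = g (f (u x)) := congrArg (g ∘ f) (congrFun hvu x)
    _ = g (f (v x)) := congrArg g hfx
    _ = v x := congrFun hg x

theorem apply_eq_of_unique_isMinLeftIdealIn (hS : IsLeftIdealIn S S) (hSc : IsCompact S)
    (hunique : ∀ K, IsMinLeftIdealIn S K → K = L) {x y : X} (hxy : ∃ f ∈ S, f x = f y)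
    {h : X → X} (hh : h ∈ L) : h x = h y := by
  obtain ⟨K, hK, hKmin⟩ := (hS.setOf_apply_eq hxy).exists_isMinLeftIdealIn_subset hS hSc
  rw [← hunique K hKmin] at hh
  exact (hK hh).2

theorem isTrans_exists_apply_eq_iff_existsUnique_isMinLeftIdealIn (hS : IsLeftIdealIn S S)
    (hSc : IsCompact S) :
    IsTrans X (fun x y => ∃ f ∈ S, f x = f y) ↔ ∃! L, IsMinLeftIdealIn S L := by
  constructor
  · intro htrans
    obtain ⟨L, -, hL⟩ := hS.exists_isMinLeftIdealIn_subset hS hSc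
    exact ⟨L, hL, fun L' hL' => hL'.eq_of_isTrans hL hS hSc htrans⟩
  · rintro ⟨L, hL, hunique⟩
    refine ⟨fun x y z hxy hyz => ?_⟩
    obtain ⟨h, hh⟩ := hL.1.1
    exact ⟨h, hL.1.2.1 hh, (apply_eq_of_unique_isMinLeftIdealIn hS hSc hunique hxy hh).trans
      (apply_eq_of_unique_isMinLeftIdealIn hS hSc hunique hyz hh)⟩

end Compact

section Proximal

variable {X ι : Type*}

/-- Proximality of two points under a family `α` of self-maps of a uniform space. Entourages
replace the distances `ε` of the metric definition, see `isProximal_iff_dist`. -/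
def IsProximal [UniformSpace X] (α : ι → X → X) (x y : X) : Prop :=
  ∀ U ∈ 𝓤 X, ∃ t, (α t x, α t y) ∈ U

theorem isProximal_iff_dist [PseudoMetricSpace X] {α : ι → X → X} {x y : X} :
    IsProximal α x y ↔ ∀ ε > 0, ∃ t, dist (α t x) (α t y) < ε :=
  Metric.uniformity_basis_dist.forall_iff fun _ _ hUV ⟨t, ht⟩ => ⟨t, hUV ht⟩

variable [UniformSpace X]

theorem isProximal_of_mem_closure {α : ι → X → X} {f : X → X} (hf : f ∈ closure (range α))
    {x y : X} (hxy : f x = f y) : IsProximal α x y := by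
  intro U hU
  have heval : ContinuousAt (fun g : X → X => (g x, g y)) f := by fun_prop
  have hUf : U ∈ 𝓝 (f x, f y) := (Inseparable.of_eq hxy).nhds_le_uniformity hU
  obtain ⟨_, hU, t, rfl⟩ := mem_closure_iff_nhds.1 hf _ (heval hUf)
  exact ⟨t, hU⟩

theorem isProximal_iff_exists_mem_closure [CompactSpace X] [T2Space X] {α : ι → X → X} {x y : X} :
    IsProximal α x y ↔ ∃ f ∈ closure (range α), f x = f y := by
  refine ⟨fun hprox => ?_, fun ⟨f, hf, hxy⟩ => isProximal_of_mem_closure hf hxy⟩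
  by_contra! hne
  let P : Set (X × X) := (fun f : X → X => (f x, f y)) '' closure (range α)
  have hP : IsClosed P := (isClosed_closure.isCompact.image (by fun_prop)).isClosed
  have hdiag : diagonal X ⊆ Pᶜ := by
    rintro _ hp ⟨f, hf, rfl⟩
    exact hne f hf hp
  have hPU : Pᶜ ∈ 𝓤 X :=
    nhdsSet_diagonal_eq_uniformity (α := X) ▸ hP.isOpen_compl.mem_nhdsSet.2 hdiag
  obtain ⟨t, ht⟩ := hprox _ hPU
  exact ht ⟨α t, subset_closure ⟨t, rfl⟩, rfl⟩

end Proximal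

theorem stmt_4_general {X M : Type*} [UniformSpace X] [CompactSpace X] [T2Space X] [Semigroup M]
    [Nonempty M] (α : M → X → X) (hmul : ∀ s t : M, α (s * t) = α s ∘ α t)
    (hcont : ∀ t : M, Continuous (α t)) :
    IsTrans X (IsProximal α) ↔ ∃! L : Set (X → X), IsMinLeftIdealIn (closure (range α)) L := by
  have hE : IsLeftIdealIn (closure (range α)) (closure (range α)) :=
    isLeftIdealIn_closure_self (range_nonempty α) (forall_mem_range.2 hcont)
      (forall_mem_range.2 fun s => forall_mem_range.2 fun t => ⟨s * t, hmul s t⟩)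
  have hprox : IsProximal α = fun x y => ∃ f ∈ closure (range α), f x = f y :=
    funext₂ fun _ _ => propext isProximal_iff_exists_mem_closure
  rw [hprox]
  exact isTrans_exists_apply_eq_iff_existsUnique_isMinLeftIdealIn hE isClosed_closure.isCompact

/-- The proximality relation of a monoid action on a compact metric space by
continuous surjections is transitive iff the Ellis semigroup has exactly one minimal
left ideal. -/
theorem stmt_4 {X M : Type*} [MetricSpace X] [CompactSpace X] [Monoid M]
    (α : M → X → X)
    (hone : α 1 = id)
    (hmul : ∀ s t : M, α (s * t) = α s ∘ α t)
    (hcont : ∀ t : M, Continuous (α t))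
    (hsurj : ∀ t : M, Function.Surjective (α t)) :
    (∀ x y z : X,
        (∀ ε > 0, ∃ t : M, dist (α t x) (α t y) < ε) →
        (∀ ε > 0, ∃ t : M, dist (α t y) (α t z) < ε) →
        (∀ ε > 0, ∃ t : M, dist (α t x) (α t z) < ε)) ↔
      (∃! L : Set (X → X), IsMinLeftIdealIn (closure (Set.range α)) L) := by
  simpa only [isTrans_def, isProximal_iff_dist] using stmt_4_general α hmul hcont
end

section
/- Let X be a compact metric space and α : X → X a homeomorphism. Let E be the closure of {α^n : n ∈ ℤ} and E⁺ the closure of {α^n : n ≥ 0} in the space of self-maps of X with the product topology. If f ∈ E and g ∈ E⁺ is not of the form α^m for any m ≥ 0, then f ∘ g ∈ E⁺. -/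
/-- The `n`-th power (`n : ℤ`) of a homeomorphism `α`, as a self-map. -/
def zIter {X : Type*} [TopologicalSpace X] (α : X ≃ₜ X) (n : ℤ) : X → X :=
  if 0 ≤ n then (⇑α)^[n.toNat] else (⇑α.symm)^[(-n).toNat]

/-!
A point `g` of `E⁺` that is not some `α ^ m`, `m ≥ 0`, is a cluster point of the sequence `α ^ k`
as `k → ∞`. Composing on the left with `α ^ n` only shifts this sequence, so it maps cluster points
to cluster points even for negative `n`. The cluster points form a closed subset of `E⁺`, and
`f ↦ f ∘ g` is continuous for pointwise convergence, so `f ∘ g` is a cluster point for every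
`f ∈ E`.
-/

open Filter Set Topology

theorem mapClusterPt_cofinite_of_mem_closure_range {ι Y : Type*} [TopologicalSpace Y] [T1Space Y]
    {u : ι → Y} {y : Y} (hy : y ∈ closure (range u)) (hyu : y ∉ range u) :
    MapClusterPt y cofinite u := by
  rw [mapClusterPt_iff_frequently]
  intro s hs
  rw [frequently_cofinite_iff_infinite]
  intro hfin
  have hremoved : (u '' {i | u i ∈ s})ᶜ ∈ 𝓝 y :=
    (hfin.image u).isClosed.isOpen_compl.mem_nhds fun h => hyu (image_subset_range _ _ h)
  obtain ⟨_, ⟨his, hi⟩, i, rfl⟩ := mem_closure_iff_nhds.1 hy _ (inter_mem hs hremoved)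
  exact hi (mem_image_of_mem u his)

section Homeomorph

variable {X : Type*} [TopologicalSpace X] (α : X ≃ₜ X)

theorem homeomorph_coe_pow (n : ℕ) : ⇑(α ^ n) = (⇑α)^[n] :=
  hom_coe_pow _ rfl (fun _ _ => rfl) _ _

theorem zIter_eq_coe_zpow (n : ℤ) : zIter α n = ⇑(α ^ n) := by
  obtain ⟨k, rfl | rfl⟩ := n.eq_nat_or_neg
  · simp [zIter, homeomorph_coe_pow]
  · rcases k.eq_zero_or_pos with rfl | hk
    · rfl
    · have hneg : ¬ (0 : ℤ) ≤ -k := by lia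
      rw [zIter, if_neg hneg, neg_neg, Int.toNat_natCast, zpow_neg, zpow_natCast, ← inv_pow,
        homeomorph_coe_pow]
      rfl

variable {α}

theorem mapClusterPt_zpow_comp {g : X → X} (hg : MapClusterPt g atTop fun k : ℕ => ⇑(α ^ k))
    (n : ℤ) : MapClusterPt (⇑(α ^ n) ∘ g) atTop fun k : ℕ => ⇑(α ^ k) := by
  have hcont : Continuous fun h : X → X => ⇑(α ^ n) ∘ h := by fun_prop
  have htranslate : MapClusterPt (⇑(α ^ n) ∘ g) atTop fun k : ℕ => ⇑(α ^ (n + k)) := by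
    simp only [zpow_add, zpow_natCast]
    exact hg.continuousAt_comp hcont.continuousAt
  have hshift : Tendsto (fun k : ℕ => (n + k).toNat) atTop atTop :=
    tendsto_atTop.2 fun b => by
      filter_upwards [eventually_ge_atTop (b + n.natAbs)] with k hk
      lia
  refine MapClusterPt.of_comp hshift (htranslate.congrFun ?_)
  filter_upwards [eventually_ge_atTop n.natAbs] with k hk
  have hcast : ((n + k).toNat : ℤ) = n + k := by lia
  simp [← zpow_natCast, hcast]

theorem mapClusterPt_comp_of_mem_closure_zpow {f g : X → X}
    (hf : f ∈ closure (range fun n : ℤ => ⇑(α ^ n)))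
    (hg : MapClusterPt g atTop fun k : ℕ => ⇑(α ^ k)) :
    MapClusterPt (f ∘ g) atTop fun k : ℕ => ⇑(α ^ k) := by
  have hclosed : IsClosed {h : X → X | MapClusterPt (h ∘ g) atTop fun k : ℕ => ⇑(α ^ k)} :=
    isClosed_setOfPred_clusterPt.preimage (Pi.continuous_precomp g)
  have hpowers : (range fun n : ℤ => ⇑(α ^ n)) ⊆
      {h : X → X | MapClusterPt (h ∘ g) atTop fun k : ℕ => ⇑(α ^ k)} :=
    range_subset_iff.2 (mapClusterPt_zpow_comp hg)
  exact closure_minimal hpowers hclosed hf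

end Homeomorph

theorem stmt_6_general {X : Type*} [TopologicalSpace X] [T1Space X] (α : X ≃ₜ X)
    (f g : X → X)
    (hf : f ∈ closure {h : X → X | ∃ n : ℤ, h = zIter α n})
    (hg : g ∈ closure {h : X → X | ∃ n : ℕ, h = (⇑α)^[n]})
    (hgnot : ¬∃ n : ℕ, g = (⇑α)^[n]) :
    f ∘ g ∈ closure {h : X → X | ∃ n : ℕ, h = (⇑α)^[n]} := by
  have hpowers : {h : X → X | ∃ n : ℕ, h = (⇑α)^[n]} = range fun n : ℕ => ⇑(α ^ n) := by
    ext h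
    simp only [homeomorph_coe_pow, mem_ofPred_eq, mem_range, eq_comm]
  have hzpowers : {h : X → X | ∃ n : ℤ, h = zIter α n} = range fun n : ℤ => ⇑(α ^ n) := by
    ext h
    simp only [zIter_eq_coe_zpow, mem_ofPred_eq, mem_range, eq_comm]
  have hg_notMem : g ∉ range fun n : ℕ => ⇑(α ^ n) := hpowers ▸ hgnot
  rw [hpowers] at hg ⊢
  rw [hzpowers] at hf
  have hg_cluster : MapClusterPt g atTop fun k : ℕ => ⇑(α ^ k) :=
    Nat.cofinite_eq_atTop ▸ mapClusterPt_cofinite_of_mem_closure_range hg hg_notMem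
  have hfg_cluster := mapClusterPt_comp_of_mem_closure_zpow hf hg_cluster
  exact isClosed_closure.mem_of_mapClusterPt hfg_cluster
    (Eventually.of_forall fun k => subset_closure (mem_range_self k))

/-- For a homeomorphism `α` of a compact metric space, if `f` belongs to the
Ellis semigroup `E` of the `ℤ`-action and `g` belongs to `E⁺` (closure of nonnegative
powers) but is not itself a nonnegative power of `α`, then `f ∘ g ∈ E⁺`. -/
theorem stmt_6 {X : Type*} [MetricSpace X] [CompactSpace X] (α : X ≃ₜ X)
    (f g : X → X)
    (hf : f ∈ closure {h : X → X | ∃ n : ℤ, h = zIter α n})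
    (hg : g ∈ closure {h : X → X | ∃ n : ℕ, h = (⇑α)^[n]})
    (hgnot : ¬∃ n : ℕ, g = (⇑α)^[n]) :
    f ∘ g ∈ closure {h : X → X | ∃ n : ℕ, h = (⇑α)^[n]} :=
  stmt_6_general α f g hf hg hgnot
end

section
/- Let X be a compact metric space and α : X → X a homeomorphism, with E the closure of {α^n : n ∈ ℤ} and E⁺ the closure of {α^n : n ≥ 0} in the space of self-maps of X with the product topology. Then every minimal left ideal of E⁺ is a minimal left ideal of E. In particular, if E⁺ is a group (every f ∈ E⁺ has g ∈ E⁺ with f ∘ g = g ∘ f = id), then E = E⁺. -/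
/-!
Write `E⁺` for `forwardEllis α` and `E` for `ellis α`. A minimal left ideal `L` of `E⁺` equals
`E⁺ ∘ g` for each `g ∈ L`, so it is compact, hence closed. Since `α` commutes with `E⁺`, `α ∘ L` is
again a left ideal of `E⁺` inside `L`, so `α ∘ L = L` and `L` is stable under `α` and `α⁻¹`. Being
closed, it is then stable under all of `E`. If `E⁺` is a group, it contains `α⁻¹`, so `E⁺` itself is
a closed set stable under `α` and `α⁻¹`, and the same principle gives `E ⊆ E⁺`.
-/

open Set

section LeftIdeals

variable {X : Type*} {S T L : Set (X → X)}

theorem IsLeftIdealIn.mono (hL : IsLeftIdealIn T L) (hST : S ⊆ T) (hLS : L ⊆ S) :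
    IsLeftIdealIn S L :=
  ⟨hL.1, hLS, fun f hf => hL.2.2 f (hST hf)⟩

theorem IsMinLeftIdealIn.of_isLeftIdealIn (hL : IsMinLeftIdealIn S L) (hST : S ⊆ T)
    (hLT : IsLeftIdealIn T L) : IsMinLeftIdealIn T L :=
  ⟨hLT, fun L' hL' hsub => hL.2 L' (hL'.mono hST (hsub.trans hL.1.2.1)) hsub⟩

theorem IsMinLeftIdealIn.image_comp_right_eq (hL : IsMinLeftIdealIn S L)
    (hS : ∀ f ∈ S, ∀ g ∈ S, f ∘ g ∈ S) {g : X → X} (hg : g ∈ L) : (· ∘ g) '' S = L := by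
  obtain ⟨⟨-, hLS, hSL⟩, hmin⟩ := hL
  have hsub : (· ∘ g) '' S ⊆ L := image_subset_iff.2 fun f hf => hSL f hf g hg
  refine hmin _ ⟨⟨g ∘ g, g, hLS hg, rfl⟩, hsub.trans hLS, ?_⟩ hsub
  rintro f hf _ ⟨k, hk, rfl⟩
  exact ⟨f ∘ k, hS f hf k hk, rfl⟩

theorem IsMinLeftIdealIn.image_comp_left_eq (hL : IsMinLeftIdealIn S L) {a : X → X} (ha : a ∈ S)
    (hcomm : ∀ f ∈ S, f ∘ a = a ∘ f) : (a ∘ ·) '' L = L := by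
  obtain ⟨⟨hne, hLS, hSL⟩, hmin⟩ := hL
  have hsub : (a ∘ ·) '' L ⊆ L := image_subset_iff.2 fun f hf => hSL a ha f hf
  refine hmin _ ⟨hne.image _, hsub.trans hLS, ?_⟩ hsub
  rintro f hf _ ⟨k, hk, rfl⟩
  exact ⟨f ∘ k, hSL f hf k hk, congrArg (· ∘ k) (hcomm f hf).symm⟩

theorem IsMinLeftIdealIn.isClosed [TopologicalSpace X] [T2Space X] (hL : IsMinLeftIdealIn S L)
    (hS : ∀ f ∈ S, ∀ g ∈ S, f ∘ g ∈ S) (hScompact : IsCompact S) : IsClosed L := by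
  obtain ⟨g, hg⟩ := hL.1.1
  rw [← hL.image_comp_right_eq hS hg]
  exact (hScompact.image (Pi.continuous_precomp g)).isClosed

end LeftIdeals

theorem iterate_comp_mem {X : Type*} {φ : X → X} {C : Set (X → X)} (hφ : MapsTo (φ ∘ ·) C C)
    {g : X → X} (hg : g ∈ C) (n : ℕ) : φ^[n] ∘ g ∈ C := by
  induction n with
  | zero => exact hg
  | succ n ih =>
    rw [Function.iterate_succ']
    exact hφ ih

section Ellis

variable {X : Type*} [TopologicalSpace X]

/-- The forward Ellis semigroup `E⁺` of a self-map `φ`: the pointwise closure of its iterates. -/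
def forwardEllis (φ : X → X) : Set (X → X) :=
  closure {h : X → X | ∃ n : ℕ, h = φ^[n]}

/-- The Ellis (enveloping) semigroup `E` of the `ℤ`-action generated by a homeomorphism `α`: the
pointwise closure of all its integer powers. -/
def ellis (α : X ≃ₜ X) : Set (X → X) :=
  closure {h : X → X | ∃ n : ℤ, h = zIter α n}

theorem iterate_mem_forwardEllis (φ : X → X) (n : ℕ) : φ^[n] ∈ forwardEllis φ :=
  subset_closure ⟨n, rfl⟩

theorem self_mem_forwardEllis (φ : X → X) : φ ∈ forwardEllis φ :=
  iterate_mem_forwardEllis φ 1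

theorem zIter_natCast (α : X ≃ₜ X) (n : ℕ) : zIter α n = α^[n] := by
  simp [zIter]

theorem forwardEllis_subset_ellis (α : X ≃ₜ X) : forwardEllis α ⊆ ellis α := by
  refine closure_mono ?_
  rintro _ ⟨n, rfl⟩
  exact ⟨n, (zIter_natCast α n).symm⟩

theorem comp_mem_of_mem_forwardEllis {φ : X → X} {C : Set (X → X)} (hC : IsClosed C)
    (hφ : MapsTo (φ ∘ ·) C C) {f g : X → X} (hf : f ∈ forwardEllis φ) (hg : g ∈ C) :
    f ∘ g ∈ C := by
  refine closure_minimal ?_ (hC.preimage (Pi.continuous_precomp g)) hf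
  rintro _ ⟨n, rfl⟩
  exact iterate_comp_mem hφ hg n

theorem comp_mem_of_mem_ellis {α : X ≃ₜ X} {C : Set (X → X)} (hC : IsClosed C)
    (hα : MapsTo (α ∘ ·) C C) (hsymm : MapsTo (α.symm ∘ ·) C C) {f g : X → X}
    (hf : f ∈ ellis α) (hg : g ∈ C) : f ∘ g ∈ C := by
  refine closure_minimal ?_ (hC.preimage (Pi.continuous_precomp g)) hf
  rintro _ ⟨n, rfl⟩
  rw [mem_preimage, zIter]
  split_ifs
  · exact iterate_comp_mem hα hg _
  · exact iterate_comp_mem hsymm hg _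

theorem mapsTo_self_comp_forwardEllis {φ : X → X} (hφ : Continuous φ) :
    MapsTo (φ ∘ ·) (forwardEllis φ) (forwardEllis φ) := by
  refine MapsTo.closure ?_ (continuous_pi fun x => hφ.comp (continuous_apply x))
  rintro _ ⟨n, rfl⟩
  exact ⟨n + 1, (Function.iterate_succ' φ n).symm⟩

theorem comp_mem_forwardEllis {φ : X → X} (hφ : Continuous φ) :
    ∀ f ∈ forwardEllis φ, ∀ g ∈ forwardEllis φ, f ∘ g ∈ forwardEllis φ := fun _ hf _ hg =>
  comp_mem_of_mem_forwardEllis isClosed_closure (mapsTo_self_comp_forwardEllis hφ) hf hg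

theorem comp_self_eq_of_mem_forwardEllis [T2Space X] {φ : X → X} (hφ : Continuous φ) :
    ∀ f ∈ forwardEllis φ, f ∘ φ = φ ∘ f := by
  have hclosed : IsClosed {f : X → X | f ∘ φ = φ ∘ f} :=
    isClosed_eq (Pi.continuous_precomp φ) (continuous_pi fun x => hφ.comp (continuous_apply x))
  refine closure_minimal ?_ hclosed
  rintro _ ⟨n, rfl⟩
  exact (Function.Commute.iterate_self φ n).comp_eq

theorem IsMinLeftIdealIn.ellis_of_forwardEllis [T2Space X] [CompactSpace X] {α : X ≃ₜ X}
    {L : Set (X → X)} (hL : IsMinLeftIdealIn (forwardEllis α) L) :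
    IsMinLeftIdealIn (ellis α) L := by
  have hclosed : IsClosed L :=
    hL.isClosed (comp_mem_forwardEllis α.continuous) isClosed_closure.isCompact
  have himage : (α ∘ ·) '' L = L :=
    hL.image_comp_left_eq (self_mem_forwardEllis α)
      (comp_self_eq_of_mem_forwardEllis α.continuous)
  have hα : MapsTo (α ∘ ·) L L := mapsTo_iff_image_subset.2 himage.subset
  have hsymm : MapsTo (α.symm ∘ ·) L L := by
    intro g hg
    obtain ⟨k, hk, rfl⟩ := himage.superset hg
    simpa [← Function.comp_assoc] using hk
  exact hL.of_isLeftIdealIn (forwardEllis_subset_ellis α)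
    ⟨hL.1.1, hL.1.2.1.trans (forwardEllis_subset_ellis α),
      fun _ hf _ hg => comp_mem_of_mem_ellis hclosed hα hsymm hf hg⟩

theorem ellis_eq_forwardEllis_of_symm_mem {α : X ≃ₜ X} (h : ⇑α.symm ∈ forwardEllis α) :
    ellis α = forwardEllis α :=
  (forwardEllis_subset_ellis α).antisymm' fun _ hf =>
    comp_mem_of_mem_ellis isClosed_closure (mapsTo_self_comp_forwardEllis α.continuous)
      (comp_mem_forwardEllis α.continuous _ h) hf (iterate_mem_forwardEllis α 0)

end Ellis

theorem stmt_7_general {X : Type*} [TopologicalSpace X] [T2Space X] [CompactSpace X] (α : X ≃ₜ X) :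
    (∀ L : Set (X → X),
      IsMinLeftIdealIn (closure {h : X → X | ∃ n : ℕ, h = (⇑α)^[n]}) L →
      IsMinLeftIdealIn (closure {h : X → X | ∃ n : ℤ, h = zIter α n}) L) ∧
    ((∀ f ∈ closure {h : X → X | ∃ n : ℕ, h = (⇑α)^[n]},
        ∃ g ∈ closure {h : X → X | ∃ n : ℕ, h = (⇑α)^[n]},
          f ∘ g = id ∧ g ∘ f = id) →
      closure {h : X → X | ∃ n : ℤ, h = zIter α n} =
        closure {h : X → X | ∃ n : ℕ, h = (⇑α)^[n]}) := by
  refine ⟨fun L hL => hL.ellis_of_forwardEllis, fun hgroup => ?_⟩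
  obtain ⟨g, hg, hαg, -⟩ := hgroup α (self_mem_forwardEllis α)
  have hsymm : ⇑α.symm = g := α.leftInverse_symm.eq_rightInverse (congrFun hαg)
  exact ellis_eq_forwardEllis_of_symm_mem (hsymm ▸ hg)

/-- For a homeomorphism `α` of a compact metric space, every minimal left ideal
of `E⁺` is a minimal left ideal of `E`; in particular, if `E⁺` is a group then `E = E⁺`. -/
theorem stmt_7 {X : Type*} [MetricSpace X] [CompactSpace X] (α : X ≃ₜ X) :
    (∀ L : Set (X → X),
      IsMinLeftIdealIn (closure {h : X → X | ∃ n : ℕ, h = (⇑α)^[n]}) L →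
      IsMinLeftIdealIn (closure {h : X → X | ∃ n : ℤ, h = zIter α n}) L) ∧
    ((∀ f ∈ closure {h : X → X | ∃ n : ℕ, h = (⇑α)^[n]},
        ∃ g ∈ closure {h : X → X | ∃ n : ℕ, h = (⇑α)^[n]},
          f ∘ g = id ∧ g ∘ f = id) →
      closure {h : X → X | ∃ n : ℤ, h = zIter α n} =
        closure {h : X → X | ∃ n : ℕ, h = (⇑α)^[n]}) :=
  stmt_7_general α
end

section
/- Let A be a nonempty finite alphabet and X ⊆ A^ℤ a two-sided subshift, i.e., a nonempty closed subset of A^ℤ (product topology) with σ(X) = X, where σ is the left shift (σx)_n = x_{n+1}. Suppose x, y ∈ X form a forward Li-Yorke pair: they are forward proximal (for every N there is n₀ ≥ 0 with x_n = y_n for all n with n₀ < n ≤ n₀ + N) but not forward asymptotic (there is no n₀ such that x_n = y_n for all n > n₀). Then there exists f in E⁺, the closure of {σ^k restricted to X : k ∈ ℕ} in the self-maps of X with the product topology, such that f(x) ≠ f(y) but f(x) and f(y) are forward asymptotic; in particular f is not injective on its image and hence f is not completely regular (there is no g ∈ E⁺ with f ∘ g ∘ f = f and f ∘ g = g ∘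 f). -/
/-- The left shift on two-sided sequences. -/
def lshift {A : Type*} (x : ℤ → A) : ℤ → A := fun n => x (n + 1)

/-- Two two-sided sequences are forward asymptotic iff they eventually agree to the right. -/
def FwdAsympSeq {A : Type*} (x y : ℤ → A) : Prop :=
  ∃ n₀ : ℤ, ∀ n : ℤ, n₀ < n → x n = y n

/-- Two two-sided sequences are forward proximal iff they agree on arbitrarily long
segments to the right. -/
def FwdProxSeq {A : Type*} (x y : ℤ → A) : Prop :=
  ∀ N : ℕ, ∃ n₀ : ℤ, 0 ≤ n₀ ∧ ∀ n : ℤ, n₀ < n → n ≤ n₀ + (N : ℤ) → x n = y n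

/-!
Since `x, y` are proximal but not asymptotic, there are arbitrarily large times `k` with `x k ≠ y k`
after which `x` and `y` agree for a long while: take the last disagreement before a long enough
stretch of agreement. A limit `F` of the corresponding powers of the shift satisfies
`F x 0 ≠ F y 0` and `F x n = F y n` for `n > 0`. As the powers tend to infinity, `F` identifies
forward asymptotic points, in particular `F x` and `F y`. A completely regular map is injective on
its image, so `F` is not completely regular.
-/

open Filter Set Topology

section

variable {A : Type*}

lemma lshift_iterate_apply (k : ℕ) (x : ℤ → A) (n : ℤ) : lshift^[k] x n = x (n + k) := by
  induction k generalizing x with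
  | zero => simp
  | succ k ih =>
    rw [Function.iterate_succ_apply, ih, lshift]
    push_cast
    ring_nf

lemma injOn_range_of_completelyRegular {α : Type*} {f g : α → α}
    (hfgf : f ∘ g ∘ f = f) (hcomm : f ∘ g = g ∘ f) : InjOn f (range f) := by
  have hleft : LeftInvOn g f (range f) := by
    rintro _ ⟨a, rfl⟩
    calc g (f (f a)) = f (g (f a)) := (congrFun hcomm (f a)).symm
      _ = f a := congrFun hfgf a
  exact hleft.injOn

section LiYorkePair

variable {x y : ℤ → A}

lemma exists_gt_ne_of_not_fwdAsympSeq (hnasymp : ¬FwdAsympSeq x y) (N : ℤ) :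
    ∃ n, N < n ∧ x n ≠ y n := by
  by_contra! hagree
  exact hnasymp ⟨N, hagree⟩

lemma exists_ge_ne_and_forall_eq_of_fwdProxSeq (hprox : FwdProxSeq x y)
    (hnasymp : ¬FwdAsympSeq x y) (N : ℕ) :
    ∃ k : ℕ, N ≤ k ∧ x k ≠ y k ∧ ∀ n : ℤ, 0 < n → n ≤ N → x (n + k) = y (n + k) := by
  obtain ⟨d, hNd, hd⟩ := exists_gt_ne_of_not_fwdAsympSeq hnasymp N
  -- The stretch of agreement is longer than `d`, so it cannot start before `d`.
  obtain ⟨n₀, hn₀, hagree⟩ := hprox (d.toNat + N)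
  have hdn₀ : d ≤ n₀ := by
    by_contra! hlt
    exact hd (hagree d hlt (by omega))
  obtain ⟨m, ⟨hmn₀, hm⟩, hlast⟩ := Int.exists_greatest_of_bdd
    (P := fun z => z ≤ n₀ ∧ x z ≠ y z) ⟨n₀, fun z hz => hz.1⟩ ⟨d, hdn₀, hd⟩
  have hdm : d ≤ m := hlast d ⟨hdn₀, hd⟩
  lift m to ℕ using by omega
  refine ⟨m, by omega, hm, fun n hn hnN => ?_⟩
  by_contra hne
  rcases le_or_gt (n + m) n₀ with hle | hgt
  · have := hlast (n + m) ⟨hle, hne⟩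
    omega
  · exact hne (hagree _ hgt (by omega))

lemma exists_ultrafilter_ne_and_eventually_eq_of_fwdProxSeq (hprox : FwdProxSeq x y)
    (hnasymp : ¬FwdAsympSeq x y) :
    ∃ U : Ultrafilter ℕ, (U : Filter ℕ) ≤ atTop ∧ (∀ᶠ k : ℕ in U, x k ≠ y k) ∧
      ∀ n : ℤ, 0 < n → ∀ᶠ k : ℕ in U, x (n + k) = y (n + k) := by
  choose k hk hne heq using exists_ge_ne_and_forall_eq_of_fwdProxSeq hprox hnasymp
  have hk_atTop : Tendsto k atTop atTop := tendsto_atTop_mono hk tendsto_id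
  refine ⟨(hyperfilter ℕ).map k, hk_atTop.mono_left Nat.hyperfilter_le_atTop,
    eventually_map.2 (Eventually.of_forall hne), fun n hn => Nat.hyperfilter_le_atTop ?_⟩
  filter_upwards [eventually_ge_atTop n.toNat] with N hN
  exact heq N n hn (by omega)

end LiYorkePair

/-- `F : X → X` is the limit of the powers `σ ^ k` of the shift as `k` tends along `l`. Pointwise
convergence is spelled out coordinatewise, for an alphabet with the discrete topology. -/
def IsShiftLimit {X : Set (ℤ → A)} (l : Filter ℕ) (F : X → X) : Prop :=
  ∀ (p : X) (n : ℤ), ∀ᶠ k : ℕ in l, p.1 (n + k) = (F p).1 n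

namespace IsShiftLimit

variable {X : Set (ℤ → A)} {l : Filter ℕ} [l.NeBot] {F : X → X} {p q : X}

lemma apply_eq_apply_iff (hF : IsShiftLimit l F) {n : ℤ} :
    (F p).1 n = (F q).1 n ↔ ∀ᶠ k : ℕ in l, p.1 (n + k) = q.1 (n + k) := by
  constructor
  · intro h
    filter_upwards [hF p n, hF q n] with k hp hq
    rw [hp, hq, h]
  · intro h
    obtain ⟨k, hpq, hp, hq⟩ := (h.and ((hF p n).and (hF q n))).exists
    rw [← hp, ← hq, hpq]

lemma eq_of_fwdAsympSeq (hF : IsShiftLimit l F) (hl : l ≤ atTop)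
    (hpq : FwdAsympSeq p.1 q.1) : F p = F q := by
  obtain ⟨n₀, hagree⟩ := hpq
  refine Subtype.ext (funext fun n => hF.apply_eq_apply_iff.2 (hl ?_))
  filter_upwards [eventually_gt_atTop (n₀ - n).toNat] with k hk
  exact hagree _ (by omega)

end IsShiftLimit

/-- The forward enveloping semigroup `E⁺ = E(X, ℤ⁺)`: the closure of the powers of the shift in
`X → X` with the topology of pointwise convergence. -/
def fwdEnvelopingSemigroup [TopologicalSpace A] (X : Set (ℤ → A)) : Set (X → X) :=
  closure {G : X → X | ∃ k : ℕ, ∀ p : X, (G p : ℤ → A) = lshift^[k] (p : ℤ → A)}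

section Compact

variable [TopologicalSpace A] [DiscreteTopology A] {X : Set (ℤ → A)}

lemma exists_mem_fwdEnvelopingSemigroup_isShiftLimit (hX : IsCompact X)
    (hinv : MapsTo lshift X X) (U : Ultrafilter ℕ) :
    ∃ F ∈ fwdEnvelopingSemigroup X, IsShiftLimit U F := by
  have : CompactSpace X := isCompact_iff_compactSpace.mp hX
  let S (k : ℕ) : X → X := (hinv.iterate k).restrict
  let F : X → X := (U.map S).lim
  have hS : Tendsto S U (𝓝 F) := (U.map S).le_nhds_lim
  refine ⟨F, mem_closure_of_tendsto hS (Eventually.of_forall fun k => ⟨k, fun p => rfl⟩),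
    fun p n => ?_⟩
  have hcoord : Continuous fun G : X → X => (G p).1 n :=
    (continuous_apply n).comp (continuous_subtype_val.comp (continuous_apply p))
  have hSpn : Tendsto (fun k => (S k p).1 n) U (pure ((F p).1 n)) :=
    nhds_discrete A ▸ (hcoord.tendsto F).comp hS
  filter_upwards [tendsto_pure.1 hSpn] with k hk
  rw [← hk]
  exact (lshift_iterate_apply k p.1 n).symm

theorem stmt_17_general (hX : IsCompact X) (hinv : MapsTo lshift X X) (x y : X)
    (hprox : FwdProxSeq x.1 y.1) (hnasymp : ¬FwdAsympSeq x.1 y.1) :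
    ∃ F ∈ fwdEnvelopingSemigroup X, F x ≠ F y ∧ FwdAsympSeq (F x).1 (F y).1 ∧
      ¬InjOn F (range F) ∧
      ¬∃ G ∈ fwdEnvelopingSemigroup X, F ∘ G ∘ F = F ∧ F ∘ G = G ∘ F := by
  obtain ⟨U, hU, hne, heq⟩ :=
    exists_ultrafilter_ne_and_eventually_eq_of_fwdProxSeq hprox hnasymp
  obtain ⟨F, hFE, hF⟩ := exists_mem_fwdEnvelopingSemigroup_isShiftLimit hX hinv U
  have hFne : F x ≠ F y := fun h => by
    have hzero := hF.apply_eq_apply_iff.1 (congrFun (congrArg Subtype.val h) 0)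
    obtain ⟨k, hk, hk'⟩ := (hzero.and hne).exists
    exact hk' (by simpa only [zero_add] using hk)
  have hFasymp : FwdAsympSeq (F x).1 (F y).1 :=
    ⟨0, fun n hn => hF.apply_eq_apply_iff.2 (heq n hn)⟩
  have hninj : ¬InjOn F (range F) := fun hinj =>
    hFne (hinj (mem_range_self x) (mem_range_self y) (hF.eq_of_fwdAsympSeq hU hFasymp))
  exact ⟨F, hFE, hFne, hFasymp, hninj, fun ⟨_, _, hfgf, hcomm⟩ =>
    hninj (injOn_range_of_completelyRegular hfgf hcomm)⟩

end Compact

end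

/-- In a two-sided subshift, a forward Li-Yorke pair `x, y` gives rise to an
element `F` of `E⁺` (the closure of the restricted shift powers) with `F x ≠ F y` but
`F x`, `F y` forward asymptotic; in particular `F` is not injective on its image and not
completely regular. -/
theorem stmt_17 {A : Type*} [Fintype A] [Nonempty A]
    [TopologicalSpace A] [DiscreteTopology A]
    (X : Set (ℤ → A)) (hXne : X.Nonempty) (hXcl : IsClosed X)
    (hXinv : lshift '' X = X)
    (x y : ℤ → A) (hx : x ∈ X) (hy : y ∈ X)
    (hprox : FwdProxSeq x y) (hnasymp : ¬FwdAsympSeq x y) :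
    ∃ F : X → X,
      F ∈ closure {G : X → X |
        ∃ k : ℕ, ∀ p : X, (G p : ℤ → A) = lshift^[k] (p : ℤ → A)} ∧
      F ⟨x, hx⟩ ≠ F ⟨y, hy⟩ ∧
      FwdAsympSeq (F ⟨x, hx⟩ : ℤ → A) (F ⟨y, hy⟩ : ℤ → A) ∧
      ¬Set.InjOn F (Set.range F) ∧
      ¬∃ G ∈ closure {G : X → X |
          ∃ k : ℕ, ∀ p : X, (G p : ℤ → A) = lshift^[k] (p : ℤ → A)},
        F ∘ G ∘ F = F ∧ F ∘ G = G ∘ F := by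
  exact stmt_17_general hXcl.isCompact (mapsTo_iff_image_subset.2 hXinv.subset) ⟨x, hx⟩ ⟨y, hy⟩
    hprox hnasymp
end

section
/- Let X be a totally disconnected compact metric space (a compact metric space with a basis of clopen sets) and α : X → X a continuous surjection. If the system admits a forward Li-Yorke pair, i.e., points x, y which are forward proximal but not forward asymptotic, then E⁺ = closure{α^n : n ∈ ℕ} (in the self-maps of X with the product topology) is not completely regular: there exists f ∈ E⁺ for which no g ∈ E⁺ satisfies f ∘ g ∘ f = f and f ∘ g = g ∘ f. -/
/-!
The element `f` is `α` itself. If `g` commutes with `α` and `α ∘ g ∘ α = α`, then `g` inverts `α`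
on the range of `α`, so it suffices to find `p, q` in that range which `g ∘ α` cannot keep apart.

Separate `α x` and `α y` by a clopen set `U` and follow the pair along its forward orbit. By
proximality there are arbitrarily long time windows during which `U` does not separate the pair.
The last separation before each window is followed by a long stretch without separation, and a
cluster point of the pairs at these times is a pair `(p, q)` that `U` separates although it never
separates `(α^[n] p, α^[n] q)` for `n ≥ 1`. As `U` is clopen, it then does not separate
`(g (α p), g (α q)) = (p, q)` for any `g` in the closure of the iterates, a contradiction.
-/

open Filter Set Topology Uniformity

/-- Forward proximality of `x` and `y` under iteration of `α`. Formulated with entourages so that it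
makes sense in any uniform space; `forwardProximal_iff_dist` is the metric form. -/
def ForwardProximal {X : Type*} [UniformSpace X] (α : X → X) (x y : X) : Prop :=
  ∀ V ∈ 𝓤 X, ∃ n : ℕ, (α^[n] x, α^[n] y) ∈ V

/-- The forward Ellis (enveloping) semigroup `E⁺` of `α`, as a set of self-maps: the closure of the
iterates of `α`, including `α^[0] = id`, for pointwise convergence. -/
def forwardEllisSemigroup {X : Type*} [TopologicalSpace X] (α : X → X) : Set (X → X) :=
  closure {h : X → X | ∃ n : ℕ, h = α^[n]}

/-- Complete regularity of the self-map `f` relative to a set `S` of self-maps: some `g ∈ S`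
commutes with `f` and is a generalized inverse of it. Membership `f ∈ S` is not part of the
notion. -/
def IsCompletelyRegularIn {X : Type*} (S : Set (X → X)) (f : X → X) : Prop :=
  ∃ g ∈ S, f ∘ g ∘ f = f ∧ f ∘ g = g ∘ f

theorem exists_and_forall_lt_not_of_forall_exists_window {P : ℕ → Prop} (h0 : P 0)
    (hP : ∀ k, ∃ n, ∀ i ≤ k, ¬P (i + n)) (k : ℕ) :
    ∃ m, P m ∧ ∀ i < k, ¬P (i + 1 + m) := by
  classical
  obtain ⟨n, hn⟩ := hP k
  have hle : Nat.findGreatest P n ≤ n := Nat.findGreatest_le n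
  refine ⟨Nat.findGreatest P n, Nat.findGreatest_spec n.zero_le h0, fun i hi => ?_⟩
  rcases le_total (i + 1 + Nat.findGreatest P n) n with hbefore | hafter
  · exact Nat.findGreatest_is_greatest (by lia) hbefore
  · obtain ⟨j, hj⟩ := Nat.exists_eq_add_of_le' hafter
    rw [hj]
    exact hn j (by lia)

theorem leftInvOn_range_of_comp_comp_eq {X : Type*} {f g : X → X} (hfgf : f ∘ g ∘ f = f)
    (hcomm : f ∘ g = g ∘ f) : LeftInvOn g f (range f) := by
  rintro _ ⟨w, rfl⟩
  calc g (f (f w)) = f (g (f w)) := (congrFun hcomm (f w)).symm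
    _ = f w := congrFun hfgf w

theorem tendsto_dist_iterate_zero_of_apply_eq {X : Type*} [PseudoMetricSpace X] {α : X → X}
    {x y : X} (h : α x = α y) :
    Tendsto (fun n : ℕ => dist (α^[n] x) (α^[n] y)) atTop (𝓝 0) := by
  rw [← tendsto_add_atTop_iff_nat 1]
  simp only [Function.iterate_succ_apply, h, dist_self, tendsto_const_nhds]

theorem exists_continuous_bool_ne {X : Type*} [TopologicalSpace X] [TotallySeparatedSpace X]
    {x y : X} (hxy : x ≠ y) : ∃ c : X → Bool, Continuous c ∧ c x ≠ c y := by
  obtain ⟨U, hU, hxU, hyU⟩ := exists_isClopen_of_totally_separated hxy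
  refine ⟨U.boolIndicator, (continuous_boolIndicator_iff_isClopen U).2 hU, ?_⟩
  rw [(U.mem_iff_boolIndicator x).1 hxU, (U.notMem_iff_boolIndicator y).1 hyU]
  decide

theorem setOf_apply_eq_mem_uniformity {X A : Type*} [UniformSpace X] [CompactSpace X]
    [TopologicalSpace A] [DiscreteTopology A] {c : X → A} (hc : Continuous c) :
    {z : X × X | c z.1 = c z.2} ∈ 𝓤 X := by
  have hopen : IsOpen {z : X × X | c z.1 = c z.2} :=
    (isOpen_discrete (diagonal A)).preimage (hc.prodMap hc)
  rw [← nhdsSet_diagonal_eq_uniformity, hopen.mem_nhdsSet]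
  rintro ⟨a, b⟩ (rfl : a = b)
  rfl

theorem apply_eq_of_mem_forwardEllisSemigroup {X A : Type*} [TopologicalSpace X]
    [TopologicalSpace A] [T2Space A] {c : X → A} (hc : Continuous c) {α g : X → X}
    (hg : g ∈ forwardEllisSemigroup α) {p q : X}
    (hpq : ∀ n : ℕ, c (α^[n] p) = c (α^[n] q)) : c (g p) = c (g q) := by
  have hclosed : IsClosed {h : X → X | c (h p) = c (h q)} :=
    isClosed_eq (hc.comp (continuous_apply p)) (hc.comp (continuous_apply q))
  refine closure_minimal ?_ hclosed hg
  rintro _ ⟨n, rfl⟩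
  exact hpq n

theorem forwardProximal_iff_dist {X : Type*} [PseudoMetricSpace X] {α : X → X} {x y : X} :
    ForwardProximal α x y ↔ ∀ ε > 0, ∃ n : ℕ, dist (α^[n] x) (α^[n] y) < ε := by
  constructor
  · exact fun h ε hε => h _ (Metric.dist_mem_uniformity hε)
  · intro h V hV
    obtain ⟨ε, hε, hεV⟩ := Metric.mem_uniformity_dist.1 hV
    exact (h ε hε).imp fun _ hn => hεV hn

namespace ForwardProximal

variable {X : Type*} [UniformSpace X] {α : X → X} {x y : X}

theorem apply (hα : UniformContinuous α) (h : ForwardProximal α x y) :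
    ForwardProximal α (α x) (α y) := by
  intro V hV
  obtain ⟨n, hn⟩ := h _ (hα hV)
  refine ⟨n, ?_⟩
  simpa only [Function.Commute.iterate_self α n _, mem_preimage] using hn

variable {A : Type*} [TopologicalSpace A] [DiscreteTopology A] {c : X → A} [CompactSpace X]

theorem exists_window_apply_eq (h : ForwardProximal α x y) (hα : Continuous α) (hc : Continuous c)
    (k : ℕ) : ∃ n : ℕ, ∀ i ≤ k, c (α^[i + n] x) = c (α^[i + n] y) := by
  have hagree : {z : X × X | ∀ i ≤ k, c (α^[i] z.1) = c (α^[i] z.2)} ∈ 𝓤 X :=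
    (eventually_all_finite (finite_Iic k)).2 fun i _ =>
      setOf_apply_eq_mem_uniformity (hc.comp (hα.iterate i))
  obtain ⟨n, hn⟩ := h _ hagree
  exact ⟨n, fun i hi => by simpa only [Function.iterate_add_apply] using hn i hi⟩

theorem exists_mem_closure_orbit_ne_forall_succ_eq (h : ForwardProximal α x y) (hα : Continuous α)
    (hc : Continuous c) (hxy : c x ≠ c y) :
    ∃ p q : X, (p, q) ∈ closure (range fun n : ℕ => (α^[n] x, α^[n] y)) ∧ c p ≠ c q ∧
      ∀ n : ℕ, c (α^[n + 1] p) = c (α^[n + 1] q) := by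
  have hseparated : ∀ k : ℕ, ∃ m : ℕ, c (α^[m] x) ≠ c (α^[m] y) ∧
      ∀ i < k, c (α^[i + 1 + m] x) = c (α^[i + 1 + m] y) := by
    simpa only [ne_eq, not_not] using exists_and_forall_lt_not_of_forall_exists_window
      (P := fun n => c (α^[n] x) ≠ c (α^[n] y)) hxy
      (by simpa only [ne_eq, not_not] using h.exists_window_apply_eq hα hc)
  choose m hne heq using hseparated
  let u : ℕ → X × X := fun k => (α^[m k] x, α^[m k] y)
  obtain ⟨⟨p, q⟩, -, hcluster⟩ :=
    isCompact_univ.exists_mapClusterPt (f := atTop) (u := u) (by simp)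
  refine ⟨p, q, isClosed_closure.mem_of_mapClusterPt hcluster
    (.of_forall fun k => subset_closure ⟨m k, rfl⟩), ?_, fun n => ?_⟩
  · have hclosed : IsClosed {z : X × X | c z.1 ≠ c z.2} :=
      (isClosed_discrete (diagonal A)ᶜ).preimage (hc.prodMap hc)
    exact hclosed.mem_of_mapClusterPt hcluster (.of_forall hne)
  · have hclosed : IsClosed {z : X × X | c (α^[n + 1] z.1) = c (α^[n + 1] z.2)} :=
      isClosed_eq ((hc.comp (hα.iterate _)).comp continuous_fst)
        ((hc.comp (hα.iterate _)).comp continuous_snd)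
    refine hclosed.mem_of_mapClusterPt hcluster ((eventually_gt_atTop n).mono fun k hk => ?_)
    simpa only [u, mem_ofPred_eq, ← Function.iterate_add_apply] using heq k n hk

end ForwardProximal

theorem closure_orbit_apply_subset_prod_range {X : Type*} [TopologicalSpace X] [CompactSpace X]
    [T2Space X] {α : X → X} (hα : Continuous α) (x y : X) :
    closure (range fun n : ℕ => (α^[n] (α x), α^[n] (α y))) ⊆ range α ×ˢ range α := by
  have hclosed : IsClosed (range α) := (isCompact_range hα).isClosed
  refine closure_minimal ?_ (hclosed.prod hclosed)
  rintro _ ⟨n, rfl⟩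
  exact ⟨⟨α^[n] x, (Function.Commute.iterate_self α n x).symm⟩,
    ⟨α^[n] y, (Function.Commute.iterate_self α n y).symm⟩⟩

theorem stmt_18_general {X : Type*} [UniformSpace X] [CompactSpace X] [TotallySeparatedSpace X]
    {α : X → X} (hα : Continuous α) {x y : X} (hprox : ForwardProximal α x y)
    (hne : α x ≠ α y) : ¬IsCompletelyRegularIn (forwardEllisSemigroup α) α := by
  rintro ⟨g, hg, hfgf, hcomm⟩
  have hinv : LeftInvOn g α (range α) := leftInvOn_range_of_comp_comp_eq hfgf hcomm
  obtain ⟨c, hc, hcne⟩ := exists_continuous_bool_ne hne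
  have hprox' : ForwardProximal α (α x) (α y) :=
    hprox.apply (CompactSpace.uniformContinuous_of_continuous hα)
  obtain ⟨p, q, hpq, hcpq, hsucc⟩ :=
    hprox'.exists_mem_closure_orbit_ne_forall_succ_eq hα hc hcne
  obtain ⟨hp, hq⟩ := closure_orbit_apply_subset_prod_range hα x y hpq
  have himage : c (g (α p)) = c (g (α q)) := apply_eq_of_mem_forwardEllisSemigroup hc hg hsucc
  rw [hinv hp, hinv hq] at himage
  exact hcpq himage

/-- If a continuous surjection `α` of a totally disconnected compact metric
space (one with a basis of clopen sets) admits a forward Li-Yorke pair (a forward proximal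
pair which is not forward asymptotic), then `E⁺ = closure {α^n : n ∈ ℕ}` is not completely
regular: some `f ∈ E⁺` admits no `g ∈ E⁺` with `f ∘ g ∘ f = f` and `f ∘ g = g ∘ f`. -/
theorem stmt_18 {X : Type*} [MetricSpace X] [CompactSpace X]
    (hbasis : ∃ B : Set (Set X),
      (∀ U ∈ B, IsClopen U) ∧ TopologicalSpace.IsTopologicalBasis B)
    (α : X → X) (hcont : Continuous α) (hsurj : Function.Surjective α)
    (x y : X)
    (hprox : ∀ ε > 0, ∃ n : ℕ, dist (α^[n] x) (α^[n] y) < ε)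
    (hnasymp : ¬Filter.Tendsto (fun n : ℕ => dist (α^[n] x) (α^[n] y))
      Filter.atTop (nhds 0)) :
    ∃ f ∈ closure {h : X → X | ∃ n : ℕ, h = α^[n]},
      ¬∃ g ∈ closure {h : X → X | ∃ n : ℕ, h = α^[n]},
        f ∘ g ∘ f = f ∧ f ∘ g = g ∘ f := by
  obtain ⟨B, hclopen, hB⟩ := hbasis
  have : TotallySeparatedSpace X := totallySeparatedSpace_of_t0_of_basis_clopen
    (hB.of_isOpen_of_subset (fun _ hU => hU.isOpen) hclopen)
  exact ⟨α, subset_closure ⟨1, rfl⟩, stmt_18_general hcont (forwardProximal_iff_dist.2 hprox)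
    (mt tendsto_dist_iterate_zero_of_apply_eq hnasymp)⟩
end
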